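/- Let Y be a real vector space and ≺ a compatible weak preference on Y with positive cone P_≺. Then for each open component E ∈ O(P_≺) there is a nonzero linear function φ_E : Y → ℝ such that E = {y ∈ Lin(E) | φ_E(y) > 0} and L_E = {y ∈ Lin(E) | φ_E(y) = 0}. Furthermore, φ_E(y) = 0 for all y ∈ Lin(Ẽ) whenever Ẽ ∈ O(P_≺) satisfies Ẽ ⊲* E. -/

import Mathlib

open Pointwise

variable {Y : Type*} [AddCommGroup Y] [Module ℝ Y]

/-- The positive cone of a binary relation: `{y | 0 ≺ y}`. -/
def posCone (r : Y → Y → Prop) : Set Y := {y | r 0 y}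

/-- A compatible partial preference: a binary relation compatible with the algebraic
operations which is asymmetric and transitive. -/
structure IsCompatiblePartialPreference (r : Y → Y → Prop) : Prop where
  smul_compat : ∀ ⦃y₁ y₂ : Y⦄ ⦃l : ℝ⦄, 0 < l → r y₁ y₂ → r (l • y₁) (l • y₂)
  add_compat : ∀ ⦃y₁ y₂ : Y⦄ (y : Y), r y₁ y₂ → r (y₁ + y) (y₂ + y)
  asymm : ∀ ⦃y₁ y₂ : Y⦄, r y₁ y₂ → ¬ r y₂ y₁
  trans : ∀ ⦃y₁ y₂ y₃ : Y⦄, r y₁ y₂ → r y₂ y₃ → r y₁ y₃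

/-- A compatible weak preference: a compatible partial preference whose indifference
relation (`y ≍ z` iff neither `y ≺ z` nor `z ≺ y`) is transitive. -/
structure IsCompatibleWeakPreference (r : Y → Y → Prop)
    extends IsCompatiblePartialPreference r : Prop where
  indiff_trans : ∀ ⦃y z u : Y⦄, ¬ r y z → ¬ r z y → ¬ r z u → ¬ r u z → ¬ r y u ∧ ¬ r u y

/-- The majorization relation on the positive cone: `y ⊴ z` iff `μ • y ≺ z` for some `μ > 0`. -/
def maj (r : Y → Y → Prop) (y z : Y) : Prop := ∃ μ : ℝ, 0 < μ ∧ r (μ • y) z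

/-- The equivalence `y ≖ z` : `y ⊴ z` and `z ⊴ y`. -/
def majEquiv (r : Y → Y → Prop) (y z : Y) : Prop := maj r y z ∧ maj r z y

/-- The `≖`-equivalence class of `y` inside the positive cone. -/
def componentOf (r : Y → Y → Prop) (y : Y) : Set Y := {z ∈ posCone r | majEquiv r z y}

/-- Open components of the positive cone: the equivalence classes of `≖`. -/
def IsOpenComponent (r : Y → Y → Prop) (E : Set Y) : Prop :=
  ∃ y ∈ posCone r, E = componentOf r y

/-- The order `⊴*` on open components: `E₁ ⊴* E₂` iff `y₁ ⊴ y₂` for all `y₁ ∈ E₁`, `y₂ ∈ E₂`. -/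
def compLE (r : Y → Y → Prop) (E₁ E₂ : Set Y) : Prop :=
  ∀ y₁ ∈ E₁, ∀ y₂ ∈ E₂, maj r y₁ y₂

/-- The relative algebraic interior (intrinsic core) of a (convex) set. -/
def icr (Q : Set Y) : Set Y :=
  {z ∈ Q | ∀ y ∈ Q, ∃ δ : ℝ, 0 < δ ∧ ∀ t : ℝ, -δ < t → t < δ → z + t • (y - z) ∈ Q}

/-- The algebraic interior (core) of a set. -/
def algCr (Q : Set Y) : Set Y :=
  {z ∈ Q | ∀ y : Y, ∃ δ : ℝ, 0 < δ ∧ ∀ t : ℝ, -δ < t → t < δ → z + t • (y - z) ∈ Q}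

/-- The vector space associated with a convex cone `K`:
`L_K = {h | y + t•h ∈ K for all y ∈ K, t ∈ ℝ}`. -/
def assocSubspace (K : Set Y) : Set Y := {h | ∀ y ∈ K, ∀ t : ℝ, y + t • h ∈ K}

/-- A cone: a set closed under multiplication by positive reals. -/
def IsConeSet (K : Set Y) : Prop := ∀ y ∈ K, ∀ l : ℝ, 0 < l → l • y ∈ K

/-- A face of a convex set `Q`: a nonempty convex subset `F ⊆ Q` such that whenever a point
`α•u + (1-α)•v` (with `u, v ∈ Q`, `0 < α < 1`) lies in `F`, both `u` and `v` lie in `F`. -/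
def IsFaceOf (Q F : Set Y) : Prop :=
  F.Nonempty ∧ Convex ℝ F ∧ F ⊆ Q ∧
    ∀ u ∈ Q, ∀ v ∈ Q, ∀ α : ℝ, 0 < α → α < 1 → α • u + (1 - α) • v ∈ F → u ∈ F ∧ v ∈ F

/-- `F_y`: the members of the family `F` not vanishing at `y`. -/
def Fy (F : Set (Y →ₗ[ℝ] ℝ)) (y : Y) : Set (Y →ₗ[ℝ] ℝ) := {φ ∈ F | φ y ≠ 0}

/-- `φ` is the least element of `S` with respect to `le`. -/
def IsLeastWrt (le : (Y →ₗ[ℝ] ℝ) → (Y →ₗ[ℝ] ℝ) → Prop) (S : Set (Y →ₗ[ℝ] ℝ))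
    (φ : Y →ₗ[ℝ] ℝ) : Prop :=
  φ ∈ S ∧ ∀ ψ ∈ S, le φ ψ

/-- A cortege of linear functions on `Y`: a family `F` of linear functions linearly ordered
by `le` such that every nonempty `F_y` has a least element `φ_y`, and every `φ ∈ F` is `φ_y`
for some `y`. -/
structure IsCortege (F : Set (Y →ₗ[ℝ] ℝ))
    (le : (Y →ₗ[ℝ] ℝ) → (Y →ₗ[ℝ] ℝ) → Prop) : Prop where
  refl : ∀ φ ∈ F, le φ φ
  antisymm : ∀ φ ∈ F, ∀ ψ ∈ F, le φ ψ → le ψ φ → φ = ψ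
  trans : ∀ φ ∈ F, ∀ ψ ∈ F, ∀ χ ∈ F, le φ ψ → le ψ χ → le φ χ
  total : ∀ φ ∈ F, ∀ ψ ∈ F, le φ ψ ∨ le ψ φ
  least_exists : ∀ y : Y, Fy F y = ∅ ∨ ∃ φ, IsLeastWrt le (Fy F y) φ
  surj : ∀ φ ∈ F, ∃ y : Y, IsLeastWrt le (Fy F y) φ

/-- A step-linear function: `u(y) = 0` if `F_y = ∅` and `u(y) = φ_y(y)` otherwise,
for some cortege `(F, le)`. -/
def IsStepLinear (u : Y → ℝ) : Prop :=
  ∃ (F : Set (Y →ₗ[ℝ] ℝ)) (le : (Y →ₗ[ℝ] ℝ) → (Y →ₗ[ℝ] ℝ) → Prop),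
    IsCortege F le ∧
      ∀ y : Y, (Fy F y = ∅ ∧ u y = 0) ∨ ∃ φ, IsLeastWrt le (Fy F y) φ ∧ u y = φ y

section Aux

theorem aux_sub {r : Y → Y → Prop} (h : IsCompatiblePartialPreference r) (a b : Y) :
    r a b ↔ r 0 (b - a) := by
  constructor
  · intro hab
    have := h.add_compat (-a) hab
    simpa [sub_eq_add_neg] using this
  · intro hab
    have := h.add_compat a hab
    simpa using this

theorem aux_add {r : Y → Y → Prop} (h : IsCompatiblePartialPreference r) {a b : Y}
    (ha : r 0 a) (hb : r 0 b) : r 0 (a + b) := by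
  refine h.trans hb ?_
  have := h.add_compat b ha
  simpa using this

theorem aux_smul {r : Y → Y → Prop} (h : IsCompatiblePartialPreference r) {a : Y}
    {t : ℝ} (ht : 0 < t) (ha : r 0 a) : r 0 (t • a) := by
  have := h.smul_compat ht ha
  simpa using this

theorem aux_neg {r : Y → Y → Prop} (h : IsCompatiblePartialPreference r) {a : Y}
    (ha : r 0 a) : ¬ r 0 (-a) := by
  intro hn
  have h1 := (aux_sub h a 0).2 (by simpa using hn)
  exact h.asymm ha h1

theorem aux_zero {r : Y → Y → Prop} (h : IsCompatiblePartialPreference r) :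
    ¬ r 0 (0 : Y) := fun h0 => h.asymm h0 h0

theorem aux_smul_iff {r : Y → Y → Prop} (h : IsCompatiblePartialPreference r) {a : Y}
    {t : ℝ} (ht : 0 < t) : r 0 (t • a) ↔ r 0 a := by
  constructor
  · intro ha
    have := aux_smul h (inv_pos.2 ht) ha
    rwa [smul_smul, inv_mul_cancel₀ ht.ne', one_smul] at this
  · exact aux_smul h ht

/-- positive plus non-negative is positive -/
theorem aux_add' {r : Y → Y → Prop} (h : IsCompatibleWeakPreference r) {a b : Y}
    (ha : r 0 a) (hb : ¬ r 0 (-b)) : r 0 (a + b) := by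
  have h' := h.toIsCompatiblePartialPreference
  by_contra hab
  by_cases hpb : r 0 b
  · exact hab (aux_add h' ha hpb)
  have hn : ¬ r 0 (-(a + b)) := by
    intro hn
    apply hb
    have := aux_add h' ha hn
    have e : a + -(a + b) = -b := by abel
    rwa [e] at this
  have := h.indiff_trans (y := 0) (z := a + b) (u := a) hab
    (by rw [aux_sub h']; simpa using hn)
    (by rw [aux_sub h']; simpa using hb)
    (by rw [aux_sub h']; simpa using hpb)
  exact this.1 ha

/-- non-negative elements are closed under addition -/
theorem aux_nonneg_add {r : Y → Y → Prop} (h : IsCompatibleWeakPreference r) {a b : Y}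
    (ha : ¬ r 0 (-a)) (hb : ¬ r 0 (-b)) : ¬ r 0 (-(a + b)) := by
  intro hn
  have := aux_add' h hn hb
  have e : -(a + b) + b = -a := by abel
  rw [e] at this
  exact ha this

/-- the subspace of elements bounded by `e` -/
def auxB {r : Y → Y → Prop} (h : IsCompatiblePartialPreference r) (e : Y) (he : r 0 e) :
    Submodule ℝ Y where
  carrier := {y | ∃ c : ℝ, 0 < c ∧ r 0 (c • e - y) ∧ r 0 (c • e + y)}
  zero_mem' := ⟨1, one_pos, by simpa using he, by simpa using he⟩
  add_mem' := by
    rintro a b ⟨c, hc, h1, h2⟩ ⟨d, hd, h3, h4⟩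
    refine ⟨c + d, by positivity, ?_, ?_⟩
    · have := aux_add h h1 h3
      have e' : (c + d) • e - (a + b) = c • e - a + (d • e - b) := by module
      rwa [e']
    · have := aux_add h h2 h4
      have e' : (c + d) • e + (a + b) = c • e + a + (d • e + b) := by module
      rwa [e']
  smul_mem' := by
    rintro t a ⟨c, hc, h1, h2⟩
    rcases lt_trichotomy t 0 with ht | ht | ht
    · have ht' : 0 < -t := by linarith
      refine ⟨-t * c, by positivity, ?_, ?_⟩
      · have := aux_smul h ht' h2
        have e' : (-t * c) • e - t • a = -t • (c • e + a) := by module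
        rwa [e']
      · have := aux_smul h ht' h1
        have e' : (-t * c) • e + t • a = -t • (c • e - a) := by module
        rwa [e']
    · subst ht
      exact ⟨1, one_pos, by simpa using he, by simpa using he⟩
    · refine ⟨t * c, by positivity, ?_, ?_⟩
      · have := aux_smul h ht h1
        have e' : (t * c) • e - t • a = t • (c • e - a) := by module
        rwa [e']
      · have := aux_smul h ht h2
        have e' : (t * c) • e + t • a = t • (c • e + a) := by module
        rwa [e']

theorem aux_mem {r : Y → Y → Prop} (h : IsCompatiblePartialPreference r) {e : Y}
    (he : r 0 e) (z : Y) : z ∈ componentOf r e ↔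
      z ∈ auxB h e he ∧ ∃ ν : ℝ, 0 < ν ∧ r 0 (z - ν • e) := by
  constructor
  · rintro ⟨hz, ⟨μ, hμ, h1⟩, ⟨ν, hν, h2⟩⟩
    rw [aux_sub h] at h1 h2
    refine ⟨⟨μ⁻¹, by positivity, ?_, ?_⟩, ν, hν, h2⟩
    · have := aux_smul h (inv_pos.2 hμ) h1
      rwa [smul_sub, smul_smul, inv_mul_cancel₀ hμ.ne', one_smul] at this
    · exact aux_add h (aux_smul h (inv_pos.2 hμ) he) hz
  · rintro ⟨⟨c, hc, h1, -⟩, ν, hν, h2⟩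
    refine ⟨?_, ⟨c⁻¹, by positivity, ?_⟩, ν, hν, ?_⟩
    · have := aux_add h h2 (aux_smul h hν he)
      change r 0 z
      simpa using this
    · rw [aux_sub h]
      have := aux_smul h (inv_pos.2 hc) h1
      rwa [smul_sub, smul_smul, inv_mul_cancel₀ hc.ne', one_smul] at this
    · rwa [aux_sub h]

theorem aux_self {r : Y → Y → Prop} (h : IsCompatiblePartialPreference r) {e : Y}
    (he : r 0 e) : e ∈ componentOf r e := by
  have : maj r e e := ⟨1/2, by norm_num, by
    rw [aux_sub h]
    have := aux_smul h (t := 1/2) (by norm_num) he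
    have e' : e - (1/2 : ℝ) • e = (1/2 : ℝ) • e := by module
    rwa [e']⟩
  exact ⟨he, this, this⟩

theorem aux_maj_trans {r : Y → Y → Prop} (h : IsCompatiblePartialPreference r) {a b c : Y}
    (h1 : maj r a b) (h2 : maj r b c) : maj r a c := by
  obtain ⟨μ, hμ, h1⟩ := h1
  obtain ⟨ν, hν, h2⟩ := h2
  refine ⟨ν * μ, by positivity, ?_⟩
  have := h.smul_compat hν h1
  rw [smul_smul] at this
  exact h.trans this h2

theorem aux_comp_eq {r : Y → Y → Prop} (h : IsCompatiblePartialPreference r) {a b y : Y}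
    (h1 : y ∈ componentOf r a) (h2 : y ∈ componentOf r b) :
    componentOf r a = componentOf r b := by
  obtain ⟨_, h1a, h1b⟩ := h1
  obtain ⟨_, h2a, h2b⟩ := h2
  ext z
  constructor
  · rintro ⟨hz, ha, hb⟩
    exact ⟨hz, aux_maj_trans h ha (aux_maj_trans h h1b h2a),
      aux_maj_trans h h2b (aux_maj_trans h h1a hb)⟩
  · rintro ⟨hz, ha, hb⟩
    exact ⟨hz, aux_maj_trans h ha (aux_maj_trans h h2b h1a),
      aux_maj_trans h h1b (aux_maj_trans h h2a hb)⟩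

theorem aux_sub_eq {r : Y → Y → Prop} (h : IsCompatiblePartialPreference r) {e : Y}
    (he : r 0 e) (y : Y) : y ∈ componentOf r e - componentOf r e ↔ y ∈ auxB h e he := by
  constructor
  · rintro ⟨a, ha, b, hb, rfl⟩
    exact (auxB h e he).sub_mem ((aux_mem h he a).1 ha).1 ((aux_mem h he b).1 hb).1
  · intro hy
    have heB := ((aux_mem h he e).1 (aux_self h he)).1
    obtain ⟨c, hc, h1, h2⟩ := id hy
    refine ⟨y + (c + 1) • e, ?_, (c + 1) • e, ?_, by simp⟩
    · rw [aux_mem h he]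
      refine ⟨(auxB h e he).add_mem hy ((auxB h e he).smul_mem _ heB), 1, one_pos, ?_⟩
      have e' : y + (c + 1) • e - (1 : ℝ) • e = c • e + y := by module
      rwa [e']
    · rw [aux_mem h he]
      refine ⟨(auxB h e he).smul_mem _ heB, 1, one_pos, ?_⟩
      have e' : (c + 1) • e - (1 : ℝ) • e = c • e := by module
      rw [e']
      exact aux_smul h hc he

theorem aux_phi {r : Y → Y → Prop} (h : IsCompatibleWeakPreference r) {e : Y}
    (he : r 0 e) : ∃ φ : Y →ₗ[ℝ] ℝ, φ e = 1 ∧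
      ∀ y ∈ auxB h.toIsCompatiblePartialPreference e he, ¬ r 0 (-y) → 0 ≤ φ y := by
  have h' := h.toIsCompatiblePartialPreference
  set B := auxB h.toIsCompatiblePartialPreference e he with hB
  have heB : e ∈ B := ((aux_mem h' he e).1 (aux_self h' he)).1
  let s : PointedCone ℝ B :=
    { carrier := {y | ¬ r 0 (-(y : Y))}
      zero_mem' := by
        have := aux_zero h'
        simpa using this
      smul_mem' := by
        rintro ⟨c, hc⟩ x hx
        change ¬ r 0 (-(c • (x : Y)))
        change ¬ r 0 (-(x : Y)) at hx
        rcases hc.eq_or_lt with hc | hc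
        · rw [← hc]
          have := aux_zero h'
          simpa using this
        · rwa [← smul_neg, aux_smul_iff h' hc]
      add_mem' := by
        intro x y hx hy
        exact aux_nonneg_add h hx hy }
  have hne : (⟨e, heB⟩ : B) ≠ 0 := by
    intro h0
    have : e = 0 := congrArg Subtype.val h0
    rw [this] at he
    exact aux_zero h' he
  let f : B →ₗ.[ℝ] ℝ := LinearPMap.mkSpanSingleton (⟨e, heB⟩ : B) (1 : ℝ) hne
  have hf : ∀ (c : ℝ) (hc : c • (⟨e, heB⟩ : B) ∈ f.domain), f ⟨c • (⟨e, heB⟩ : B), hc⟩ = c := by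
    intro c hc
    have := LinearPMap.mkSpanSingleton'_apply (⟨e, heB⟩ : B) (1 : ℝ)
      (fun c hc => (smul_eq_zero.1 hc).elim (fun hc => by rw [hc, RingHom.map_zero, zero_smul])
        fun hx' => absurd hx' hne) c hc
    refine Eq.trans this ?_
    simp
  have hdom : ∀ c : ℝ, c • (⟨e, heB⟩ : B) ∈ f.domain := by
    intro c
    exact Submodule.smul_mem _ _ (Submodule.mem_span_singleton_self _)
  obtain ⟨g, hg1, hg2⟩ := riesz_extension s f (by
      rintro ⟨x, hx⟩ hxs
      obtain ⟨c, rfl⟩ := Submodule.mem_span_singleton.1 hx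
      rw [hf]
      by_contra hc
      push Not at hc
      apply hxs
      have := aux_smul h' (t := -c) (by linarith) he
      simpa using this) (by
      rintro ⟨y, c, hc, h1, h2⟩
      refine ⟨⟨c • (⟨e, heB⟩ : B), hdom c⟩, ?_⟩
      exact aux_neg h' h2)
  obtain ⟨φ, hφ⟩ := LinearMap.exists_extend g
  have hφ' : ∀ y : B, φ y = g y := fun y => by rw [← hφ]; rfl
  refine ⟨φ, ?_, ?_⟩
  · have h1 := hφ' ⟨e, heB⟩
    have h2 := hg1 ⟨(1 : ℝ) • (⟨e, heB⟩ : B), hdom 1⟩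
    rw [hf] at h2
    simp only [one_smul] at h2
    rw [← h2]; exact h1
  · intro y hy hn
    have h1 := hφ' ⟨y, hy⟩
    have h2 := hg2 ⟨y, hy⟩ hn
    rw [← h1] at h2
    exact h2

end Aux

/-- For a compatible weak preference and each open component `E` there is a
nonzero linear function `φ_E` with `E = {y ∈ Lin(E) | φ_E(y) > 0}` and
`L_E = {y ∈ Lin(E) | φ_E(y) = 0}`; moreover `φ_E` vanishes on `Lin(Ẽ)` whenever
`Ẽ ⊲* E`. -/
theorem stmt_12 (r : Y → Y → Prop) (h : IsCompatibleWeakPreference r)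
    (E : Set Y) (hE : IsOpenComponent r E) :
    ∃ φ : Y →ₗ[ℝ] ℝ, φ ≠ 0 ∧
      E = {y ∈ E - E | 0 < φ y} ∧
      assocSubspace E = {y ∈ E - E | φ y = 0} ∧
      ∀ E' : Set Y, IsOpenComponent r E' → compLE r E' E → E' ≠ E →
        ∀ y ∈ E' - E', φ y = 0 := by
  obtain ⟨e, he, rfl⟩ := hE
  have he : r 0 e := he
  have h' := h.toIsCompatiblePartialPreference
  obtain ⟨φ, hφe, hφ⟩ := aux_phi h he
  set B := auxB h.toIsCompatiblePartialPreference e he with hB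
  have hmem : ∀ y, y ∈ componentOf r e ↔ y ∈ B ∧ 0 < φ y := by
    intro y
    have heB : e ∈ B := ((aux_mem h' he e).1 (aux_self h' he)).1
    rw [aux_mem h' he]
    refine and_congr_right fun hy => ?_
    constructor
    · rintro ⟨ν, hν, h1⟩
      have := hφ _ (B.sub_mem hy (B.smul_mem ν heB)) (aux_neg h' h1)
      simp only [map_sub, map_smul, hφe, smul_eq_mul] at this
      linarith
    · intro hpos
      refine ⟨φ y / 2, by positivity, ?_⟩
      by_contra hn
      have := hφ _ (B.sub_mem (B.smul_mem (φ y / 2) heB) hy) (by rwa [neg_sub])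
      simp only [map_sub, map_smul, hφe, smul_eq_mul] at this
      linarith
  have hself := aux_self h' he
  refine ⟨φ, ?_, ?_, ?_, ?_⟩
  · rintro rfl
    simp at hφe
  · ext y
    simp only [Set.mem_setOf_eq]
    rw [aux_sub_eq h' he, hmem]
  · ext y
    simp only [Set.mem_setOf_eq]
    rw [aux_sub_eq h' he]
    constructor
    · intro hy
      refine ⟨?_, ?_⟩
      · rw [← aux_sub_eq h' he]
        exact ⟨e + (1 : ℝ) • y, hy e hself 1, e, hself, by simp⟩
      · by_contra hne
        have := ((hmem _).1 (hy e hself (-(φ y)⁻¹))).2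
        simp [hφe, hne] at this
    · rintro ⟨hy, h0⟩ z hz t
      rw [hmem] at hz ⊢
      refine ⟨B.add_mem hz.1 (B.smul_mem t hy), ?_⟩
      simpa [h0] using hz.2
  · rintro E' ⟨a, ha, rfl⟩ hle hne
    have key : ∀ y ∈ componentOf r a, φ y = 0 := by
      intro y hy
      obtain ⟨μ, hμ, h1⟩ := hle y hy e hself
      have hy0 : r 0 y := hy.1
      have hyB : y ∈ B := by
        refine ⟨μ⁻¹, by positivity, ?_, aux_add h' (aux_smul h' (inv_pos.2 hμ) he) hy0⟩
        rw [aux_sub h'] at h1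
        have := aux_smul h' (inv_pos.2 hμ) h1
        rwa [smul_sub, smul_smul, inv_mul_cancel₀ hμ.ne', one_smul] at this
      have h2 := hφ y hyB (aux_neg h' hy0)
      by_contra h3
      exact hne (aux_comp_eq h' hy ((hmem y).2 ⟨hyB, lt_of_le_of_ne h2 (Ne.symm h3)⟩))
    rintro _ ⟨x, hx, y, hy, rfl⟩
    simp [key x hx, key y hy]
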